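/- Let (m, a) be a monodromy datum and let O be a finite set of integers n with 1 ≤ n ≤ m − 1 such that: (i) for every n ∈ O, m does not divide n·a(i) for any i ∈ {1, 2, 3}, and (ii) O is closed under negation modulo m, i.e., n ∈ O implies m − n ∈ O. Then 2 · #{n ∈ O : f(n) = 1} = #O, where f(n) = −1 + Σ_{i=1}^{3} ⟨−n·a(i)/m⟩. (This is the combinatorial core of the supersingularity criterion: on a self-dual orbit, the number of signature values equal to 1 is half the orbit size.) -/

import Mathlib

/-- The signature value `f(n) = -1 + ⟨-n·a1/m⟩ + ⟨-n·a2/m⟩ + ⟨-n·a3/m⟩`. -/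
def sig (m a1 a2 a3 : ℕ) (n : ℤ) : ℚ :=
  -1 + Int.fract (-(n : ℚ) * a1 / m) + Int.fract (-(n : ℚ) * a2 / m)
    + Int.fract (-(n : ℚ) * a3 / m)

/-!
Since `x ↦ 1 - x` is the effect of negation on nonzero fractional parts, `f(m - n) = 1 - f(n)`.
The three arguments `-n·a(i)/m` are nonintegral with integral sum, so their fractional parts add
up to an integer strictly between `0` and `3`, that is, `f(n) ∈ {0, 1}`. Hence `n ↦ m - n`
exchanges the elements of signature `1` with those of signature `0`.
-/

section FractionalPart

theorem fract_add_fract_add_fract_eq_one_or_two {R : Type*} [CommRing R] [LinearOrder R]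
    [IsStrictOrderedRing R] [FloorRing R] {x y z : R} (hx : Int.fract x ≠ 0)
    (hy : Int.fract y ≠ 0) (hz : Int.fract z ≠ 0) (hxyz : Int.fract (x + y + z) = 0) :
    Int.fract x + Int.fract y + Int.fract z = 1 ∨ Int.fract x + Int.fract y + Int.fract z = 2 := by
  obtain ⟨s, hs⟩ : ∃ s : ℤ, Int.fract x + Int.fract y + Int.fract z = s := by
    refine ⟨⌊x + y + z⌋ - ⌊x⌋ - ⌊y⌋ - ⌊z⌋, ?_⟩
    push_cast
    linarith [Int.floor_add_fract x, Int.floor_add_fract y, Int.floor_add_fract z,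
      Int.floor_add_fract (x + y + z)]
  have s_pos : (0 : R) < s := by
    linarith [(Int.fract_nonneg x).lt_of_ne' hx, (Int.fract_nonneg y).lt_of_ne' hy,
      (Int.fract_nonneg z).lt_of_ne' hz]
  have s_lt_three : (s : R) < 3 := by
    linarith [Int.fract_lt_one x, Int.fract_lt_one y, Int.fract_lt_one z]
  have s_eq : s = 1 ∨ s = 2 := by
    have : 0 < s := by exact_mod_cast s_pos
    have : s < 3 := by exact_mod_cast s_lt_three
    omega
  rw [hs]
  exact_mod_cast s_eq

variable {k : Type*} [Field k] [LinearOrder k] [IsStrictOrderedRing k] [FloorRing k]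

theorem fract_intCast_div_natCast_eq_zero_iff {m : ℕ} (hm : m ≠ 0) (n : ℤ) :
    Int.fract ((n : k) / m) = 0 ↔ (m : ℤ) ∣ n := by
  simp [Int.fract_div_intCast_eq_div_intCast_mod, hm]

theorem fract_neg_mul_div_eq_zero_iff {m : ℕ} (hm : m ≠ 0) (n a : ℤ) :
    Int.fract (-(n : k) * a / m) = 0 ↔ (m : ℤ) ∣ n * a := by
  simpa using fract_intCast_div_natCast_eq_zero_iff (k := k) hm (-n * a)

theorem fract_neg_sub_mul_div {m : ℕ} (hm : m ≠ 0) {n a : ℤ} (h : ¬ (m : ℤ) ∣ n * a) :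
    Int.fract (-((m - n : ℤ) : k) * a / m) = 1 - Int.fract (-(n : k) * a / m) := by
  have shift : -((m - n : ℤ) : k) * a / m = -(-(n : k) * a / m) - a := by
    push_cast
    field_simp
    ring
  rw [shift, Int.fract_sub_intCast, Int.fract_neg ((fract_neg_mul_div_eq_zero_iff hm n a).not.2 h)]

end FractionalPart

theorem two_mul_card_filter_eq_card_of_involution {α : Type*} {s : Finset α} {p : α → Prop}
    [DecidablePred p] {i : α → α} (maps : Set.MapsTo i s s) (inv : Set.LeftInvOn i i s)
    (swap : ∀ x ∈ s, p (i x) ↔ ¬ p x) : 2 * (s.filter p).card = s.card := by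
  have card_eq : (s.filter p).card = (s.filter fun x => ¬ p x).card := by
    refine Finset.card_nbij' i i (fun x hx => ?_) (fun x hx => ?_)
      (fun x hx => inv (Finset.mem_filter.1 hx).1) (fun x hx => inv (Finset.mem_filter.1 hx).1)
    all_goals
      obtain ⟨hxs, hpx⟩ := Finset.mem_filter.1 hx
      exact Finset.mem_filter.2 ⟨maps hxs, by simpa [swap x hxs] using hpx⟩
  have := s.card_filter_add_card_filter_not p
  omega

theorem sub_mem_map_castEmbedding {R : Type*} [AddGroupWithOne R] [CharZero R] {s : Finset ℕ}
    {m : ℕ} (hle : ∀ n ∈ s, n ≤ m) (hsub : ∀ n ∈ s, m - n ∈ s) :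
    ∀ x ∈ s.map (Nat.castEmbedding (R := R)), (m : R) - x ∈ s.map Nat.castEmbedding :=
  Finset.forall_mem_map.2 fun n hn =>
    Finset.mem_map.2 ⟨m - n, hsub n hn, by simp [Nat.cast_sub (hle n hn)]⟩

section Signature

variable {m a1 a2 a3 : ℕ} {n : ℤ}

theorem sig_sub (hm : m ≠ 0) (h1 : ¬ (m : ℤ) ∣ n * a1) (h2 : ¬ (m : ℤ) ∣ n * a2)
    (h3 : ¬ (m : ℤ) ∣ n * a3) : sig m a1 a2 a3 (m - n) = 1 - sig m a1 a2 a3 n := by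
  have d1 := fract_neg_sub_mul_div (k := ℚ) hm h1
  have d2 := fract_neg_sub_mul_div (k := ℚ) hm h2
  have d3 := fract_neg_sub_mul_div (k := ℚ) hm h3
  simp only [Int.cast_natCast] at d1 d2 d3
  rw [sig, sig, d1, d2, d3]
  ring

theorem sig_eq_zero_or_one (hm : m ≠ 0) (hsum : m ∣ a1 + a2 + a3) (h1 : ¬ (m : ℤ) ∣ n * a1)
    (h2 : ¬ (m : ℤ) ∣ n * a2) (h3 : ¬ (m : ℤ) ∣ n * a3) :
    sig m a1 a2 a3 n = 0 ∨ sig m a1 a2 a3 n = 1 := by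
  have fract_ne_zero {a : ℕ} (h : ¬ (m : ℤ) ∣ n * a) : Int.fract (-(n : ℚ) * a / m) ≠ 0 := by
    exact_mod_cast (fract_neg_mul_div_eq_zero_iff (k := ℚ) hm n a).not.2 h
  have fract_sum : Int.fract (-(n : ℚ) * a1 / m + -(n : ℚ) * a2 / m + -(n : ℚ) * a3 / m) = 0 := by
    have dvd_sum : (m : ℤ) ∣ n * (a1 + a2 + a3 : ℕ) := (Int.natCast_dvd_natCast.2 hsum).mul_left n
    have := (fract_neg_mul_div_eq_zero_iff (k := ℚ) hm _ _).2 dvd_sum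
    rw [← add_div, ← add_div, ← mul_add, ← mul_add]
    exact_mod_cast this
  unfold sig
  rcases fract_add_fract_add_fract_eq_one_or_two (fract_ne_zero h1) (fract_ne_zero h2)
    (fract_ne_zero h3) fract_sum with sum_eq | sum_eq
  · left; linarith
  · right; linarith

theorem sig_sub_eq_one_iff (hm : m ≠ 0) (hsum : m ∣ a1 + a2 + a3) (h1 : ¬ (m : ℤ) ∣ n * a1)
    (h2 : ¬ (m : ℤ) ∣ n * a2) (h3 : ¬ (m : ℤ) ∣ n * a3) :
    sig m a1 a2 a3 (m - n) = 1 ↔ ¬ sig m a1 a2 a3 n = 1 := by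
  rw [sig_sub hm h1 h2 h3]
  rcases sig_eq_zero_or_one hm hsum h1 h2 h3 with h | h <;> simp [h]

theorem half_signature_one_on_self_dual_general (hm : m ≠ 0) (hsum : m ∣ a1 + a2 + a3)
    (O : Finset ℤ)
    (hdvd : ∀ n ∈ O, ¬ (m : ℤ) ∣ n * a1 ∧ ¬ (m : ℤ) ∣ n * a2 ∧ ¬ (m : ℤ) ∣ n * a3)
    (hclosed : ∀ n ∈ O, (m : ℤ) - n ∈ O) :
    2 * (O.filter fun n => sig m a1 a2 a3 n = 1).card = O.card :=
  two_mul_card_filter_eq_card_of_involution hclosed (fun n _ => sub_sub_cancel (m : ℤ) n)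
    fun n hn => have ⟨h1, h2, h3⟩ := hdvd n hn
      sig_sub_eq_one_iff hm hsum h1 h2 h3

end Signature

/-- For a monodromy datum `(m, a)` and a set `O` of integers in
`[1, m-1]` such that no `n·a(i)` with `n ∈ O` is divisible by `m` and `O` is closed
under `n ↦ m - n`, exactly half of the elements of `O` have signature value `1`. -/
theorem half_signature_one_on_self_dual
    (m a1 a2 a3 : ℕ) (hm : 2 ≤ m)
    (ha1 : 0 < a1) (ha2 : 0 < a2) (ha3 : 0 < a3)
    (hnd1 : ¬ m ∣ a1) (hnd2 : ¬ m ∣ a2) (hnd3 : ¬ m ∣ a3)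
    (hgcd : Nat.gcd m (Nat.gcd a1 (Nat.gcd a2 a3)) = 1)
    (hsum : (a1 + a2 + a3) % m = 0)
    (O : Finset ℕ)
    (hrange : ∀ n ∈ O, 1 ≤ n ∧ n ≤ m - 1)
    (hdvd : ∀ n ∈ O, ¬ m ∣ n * a1 ∧ ¬ m ∣ n * a2 ∧ ¬ m ∣ n * a3)
    (hclosed : ∀ n ∈ O, m - n ∈ O) :
    2 * (O.filter (fun n : ℕ => sig m a1 a2 a3 (n : ℤ) = 1)).card = O.card := by
  have hle : ∀ n ∈ O, n ≤ m := fun n hn => (hrange n hn).2.trans m.pred_le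
  simpa [Finset.filter_map, Function.comp_def] using
    half_signature_one_on_self_dual_general (by omega) (Nat.dvd_of_mod_eq_zero hsum) _
      (Finset.forall_mem_map.2 fun n hn => by
        simpa only [Nat.castEmbedding_apply, ← Nat.cast_mul, Int.natCast_dvd_natCast]
          using hdvd n hn)
      (sub_mem_map_castEmbedding hle hclosed)
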